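/- Let K be a number field with ring of integers R, and let L/K be a quadratic field extension. Let J be a full lattice in L with respect to R, i.e., a finitely generated R-submodule of L spanning L as a K-vector space. Fix x₀ ∈ L \ K and set 𝔞 := {k ∈ K : k·x₀ ∈ J + K}, a fractional ideal of R. Then J is free as an R-module if and only if the fractional ideal 𝔞 · (J ∩ K) of R is principal. -/

import Mathlib

open NumberField

open scoped nonZeroDivisors in
theorem aux_pair (R K : Type*) [CommRing R] [IsDedekindDomain R] [Field K] [Algebra R K]
    [IsFractionRing R K] (A : Submodule R K) (hA : A.FG) (h0 : A ≠ ⊥) :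
    ∃ a1 ∈ A, ∃ a2 ∈ A, ∃ g1 g2 : K, (∀ a ∈ A, ∃ r : R, algebraMap R K r = g1 * a) ∧
      (∀ a ∈ A, ∃ r : R, algebraMap R K r = g2 * a) ∧ a1 * g1 + a2 * g2 = 1 := by
  obtain ⟨I, hI⟩ : ∃ I : FractionalIdeal R⁰ K, (I : Submodule R K) = A :=
    ⟨⟨A, FractionalIdeal.isFractional_of_fg hA⟩, rfl⟩
  have hI0 : I ≠ 0 := by
    rintro rfl
    exact h0 (by rw [← hI]; simp)
  have hmem : ∀ x, x ∈ A ↔ x ∈ I := fun x => by rw [← hI]; rfl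
  obtain ⟨a, J, ha, hJ⟩ := FractionalIdeal.exists_eq_spanSingleton_mul I
  have hJ0 : J ≠ ⊥ := by
    rintro rfl
    exact hI0 (by rw [hJ]; simp)
  obtain ⟨x, hxJ, hx⟩ := Submodule.exists_mem_ne_zero_of_ne_bot hJ0
  obtain ⟨y, hy⟩ := IsDedekindDomain.exists_eq_span_pair hxJ hx
  have hyJ : y ∈ J := by rw [hy]; exact Ideal.subset_span (by simp)
  have hI' : ∀ z, z ∈ I ↔ ∃ j ∈ J, z = (algebraMap R K a)⁻¹ * algebraMap R K j := by
    intro z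
    rw [hJ, FractionalIdeal.mem_singleton_mul]
    constructor
    · rintro ⟨j, hj, rfl⟩
      obtain ⟨i, hi, h⟩ := (FractionalIdeal.mem_coeIdeal _).1 hj
      exact ⟨i, hi, by rw [h]⟩
    · rintro ⟨j, hj, rfl⟩
      exact ⟨_, (FractionalIdeal.mem_coeIdeal _).2 ⟨j, hj, rfl⟩, rfl⟩
  have key : ∀ z ∈ I * I⁻¹, ∃ g1 ∈ I⁻¹, ∃ g2 ∈ I⁻¹,
      ((algebraMap R K a)⁻¹ * algebraMap R K x) * g1 +
      ((algebraMap R K a)⁻¹ * algebraMap R K y) * g2 = z := by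
    intro z hz
    refine FractionalIdeal.mul_induction_on hz ?_ ?_
    · intro i hi g hg
      obtain ⟨j, hj, rfl⟩ := (hI' i).1 hi
      rw [hy, Ideal.mem_span_pair] at hj
      obtain ⟨r, s, rfl⟩ := hj
      refine ⟨r • g, Submodule.smul_mem (I⁻¹ : FractionalIdeal R⁰ K).1 r hg, s • g,
        Submodule.smul_mem (I⁻¹ : FractionalIdeal R⁰ K).1 s hg, ?_⟩
      simp only [Algebra.smul_def, map_add, map_mul]
      ring
    · rintro _ _ ⟨g1, h1, g2, h2, rfl⟩ ⟨g3, h3, g4, h4, rfl⟩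
      exact ⟨g1 + g3, Submodule.add_mem (I⁻¹ : FractionalIdeal R⁰ K).1 h1 h3, g2 + g4,
        Submodule.add_mem (I⁻¹ : FractionalIdeal R⁰ K).1 h2 h4, by ring⟩
  rw [mul_inv_cancel₀ hI0] at key
  obtain ⟨g1, h1, g2, h2, h⟩ := key 1 (FractionalIdeal.one_mem_one _)
  rw [FractionalIdeal.mem_inv_iff hI0] at h1 h2
  refine ⟨_, (hmem _).2 ((hI' _).2 ⟨x, hxJ, rfl⟩), _, (hmem _).2 ((hI' _).2 ⟨y, hyJ, rfl⟩),
    g1, g2, ?_, ?_, h⟩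
  · intro b hb
    exact (FractionalIdeal.mem_one_iff _).1 (h1 b ((hmem b).1 hb))
  · intro b hb
    exact (FractionalIdeal.mem_one_iff _).1 (h2 b ((hmem b).1 hb))

theorem aux_coord (K L : Type*) [Field K] [Field L] [Algebra K L]
    (hquad : Module.finrank K L = 2) (x₀ : L) (hx₀ : x₀ ∉ (algebraMap K L).range) :
    ∃ c0 c1 : L →ₗ[K] K, (∀ z, z = algebraMap K L (c0 z) + c1 z • x₀) ∧
      (∀ k, c0 (algebraMap K L k) = k) ∧ (∀ k, c1 (algebraMap K L k) = 0) ∧ c0 x₀ = 0 ∧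
      c1 x₀ = 1 := by
  have hli : LinearIndependent K ![(1 : L), x₀] := by
    rw [LinearIndependent.pair_iff' one_ne_zero]
    intro a h
    exact hx₀ ⟨a, by rw [← h, Algebra.smul_def, mul_one]⟩
  let b := basisOfLinearIndependentOfCardEqFinrank hli (by simp [hquad])
  have hb0 : b 0 = 1 := by simp [b]
  have hb1 : b 1 = x₀ := by simp [b]
  refine ⟨b.coord 0, b.coord 1, ?_, ?_, ?_, ?_, ?_⟩
  · intro z
    have := b.sum_repr z
    rw [Fin.sum_univ_two, hb0, hb1] at this
    rw [Algebra.algebraMap_eq_smul_one]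
    exact this.symm
  · intro k
    rw [Algebra.algebraMap_eq_smul_one, ← hb0]; simp
  · intro k
    rw [Algebra.algebraMap_eq_smul_one, ← hb0]; simp
  · rw [← hb1]; simp
  · rw [← hb1]; simp

theorem aux_main (R K L : Type*) [CommRing R] [IsDedekindDomain R] [Field K] [Algebra R K]
    [IsFractionRing R K] [Field L] [Algebra K L]
    [Algebra R L] [IsScalarTower R K L]
    (hquad : Module.finrank K L = 2)
    (J : Submodule R L) (hfg : J.FG)
    (hfull : Submodule.span K (J : Set L) = ⊤)
    (x₀ : L) (hx₀ : x₀ ∉ (algebraMap K L).range) (A B : Submodule R K)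
    (hA : ∀ k, k ∈ A ↔ ∃ j ∈ J, ∃ l : K, j + algebraMap K L l = k • x₀)
    (hB : ∀ k, k ∈ B ↔ algebraMap K L k ∈ J) :
    Module.Free R J ↔ Submodule.IsPrincipal (A * B) := by
  obtain ⟨c0, c1, hc, h00, h10, h0x, h1x⟩ := aux_coord K L hquad x₀ hx₀
  have hAc : ∀ j ∈ J, c1 j ∈ A := by
    intro j hj
    refine (hA _).2 ⟨j, hj, -c0 j, ?_⟩
    rw [map_neg, ← sub_eq_add_neg, sub_eq_iff_eq_add, add_comm]
    exact hc j
  have hAm : A = J.map (c1.restrictScalars R) := by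
    ext k
    rw [Submodule.mem_map]
    constructor
    · intro hk
      obtain ⟨j, hj, l, h⟩ := (hA k).1 hk
      refine ⟨j, hj, ?_⟩
      have := congrArg c1 h
      simpa [h10, h1x] using this
    · rintro ⟨j, hj, rfl⟩
      exact hAc j hj
  have hA0 : A ≠ ⊥ := by
    intro h
    have : Submodule.span K (J : Set L) ≤ LinearMap.ker c1 := by
      rw [Submodule.span_le]
      intro j hj
      have := hAc j hj
      rw [h] at this
      simpa using this
    have h2 : x₀ ∈ LinearMap.ker c1 := this (by rw [hfull]; trivial)
    simp [h1x] at h2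
  obtain ⟨a1, ha1, a2, ha2, g1, g2, hg1, hg2, hag⟩ :=
    aux_pair R K A (by rw [hAm]; exact hfg.map _) hA0
  have hlift : ∀ a ∈ A, ∃ j ∈ J, c1 j = a := by
    intro a ha
    rw [hAm] at ha
    simpa using ha
  obtain ⟨z1, hz1, hcz1⟩ := hlift a1 ha1
  obtain ⟨z2, hz2, hcz2⟩ := hlift a2 ha2
  set y : L := g1 • z1 + g2 • z2 with hy
  have hcy : c1 y = 1 := by
    rw [hy]; simp only [map_add, map_smul, hcz1, hcz2, smul_eq_mul]
    rw [← hag]; ring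
  have hAy : ∀ a ∈ A, a • y ∈ J := by
    intro a ha
    obtain ⟨r, hr⟩ := hg1 a ha
    obtain ⟨s, hs⟩ := hg2 a ha
    have : a • y = r • z1 + s • z2 := by
      rw [← algebraMap_smul K r, ← algebraMap_smul K s, hr, hs, hy, smul_add, smul_smul, smul_smul,
        mul_comm a, mul_comm a]
    rw [this]
    exact J.add_mem (J.smul_mem _ hz1) (J.smul_mem _ hz2)
  have hdec : ∀ j ∈ J, ∃ b ∈ B, j = algebraMap K L b + c1 j • y := by
    intro j hj
    have h1 : j - c1 j • y ∈ J := J.sub_mem hj (hAy _ (hAc j hj))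
    have h2 : j - c1 j • y = algebraMap K L (c0 (j - c1 j • y)) := by
      conv_lhs => rw [hc (j - c1 j • y)]
      simp [hcy]
    refine ⟨c0 (j - c1 j • y), (hB _).2 (h2 ▸ h1), ?_⟩
    rw [← h2]; abel
  constructor
  · intro hfree
    have : Module.Finite R J := Module.Finite.iff_fg.2 hfg
    let b := Module.Free.chooseBasis R J
    have hli : LinearIndependent K (fun i => (b i : L)) := by
      rw [← LinearIndependent.iff_fractionRing R K]
      exact b.linearIndependent.map' J.subtype (by simp)
    have hspan : ∀ j ∈ J, j ∈ Submodule.span R (Set.range (fun i => (b i : L))) := by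
      intro j hj
      have h1 : (⟨j, hj⟩ : J) ∈ Submodule.span R (Set.range b) := by rw [b.span_eq]; trivial
      have h2 := Submodule.mem_map_of_mem (f := J.subtype) h1
      rw [Submodule.map_span, ← Set.range_comp] at h2
      exact h2
    have htop : ⊤ ≤ Submodule.span K (Set.range (fun i => (b i : L))) := by
      rw [← hfull, Submodule.span_le]
      intro j hj
      exact Submodule.span_le_restrictScalars R K _ (hspan j hj)
    have hcard := Module.finrank_eq_card_basis (Module.Basis.mk hli htop)
    rw [hquad] at hcard
    let e := (Fintype.equivFinOfCardEq hcard.symm)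
    have hsp : ∀ j ∈ J, ∃ r s : R, j = r • (b (e.symm 0) : L) + s • (b (e.symm 1) : L) := by
      intro j hj
      have h := (b.reindex e).sum_repr ⟨j, hj⟩
      rw [Fin.sum_univ_two] at h
      have h' := congrArg J.subtype h
      simp only [map_add, map_smul, Module.Basis.reindex_apply] at h'
      exact ⟨_, _, h'.symm⟩
    have he1 := (b (e.symm 0)).2
    have he2 := (b (e.symm 1)).2
    generalize (b (e.symm 0) : L) = e1 at *
    generalize (b (e.symm 1) : L) = e2 at *
    obtain ⟨b1, hb1, h1⟩ := hdec e1 he1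
    obtain ⟨b2, hb2, h2⟩ := hdec e2 he2
    have hk1 := hAc e1 he1
    have hk2 := hAc e2 he2
    generalize c1 e1 = k1 at *
    generalize c1 e2 = k2 at *
    have huniq : ∀ p q p' q' : K, algebraMap K L p + q • y = algebraMap K L p' + q' • y →
        p = p' ∧ q = q' := by
      intro p q p' q' h
      have h3 := congrArg c1 h
      simp only [map_add, map_smul, h10, hcy, zero_add, smul_eq_mul, mul_one] at h3
      subst h3
      exact ⟨(algebraMap K L).injective (add_right_cancel h), rfl⟩
    have hco : ∀ p q : K, algebraMap K L p + q • y ∈ J → ∃ r s : R,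
        p = algebraMap R K r * b1 + algebraMap R K s * b2 ∧
        q = algebraMap R K r * k1 + algebraMap R K s * k2 := by
      intro p q h
      obtain ⟨r, s, hrs⟩ := hsp _ h
      refine ⟨r, s, huniq _ _ _ _ ?_⟩
      rw [hrs, h1, h2]
      simp only [Algebra.smul_def, map_add, map_mul, IsScalarTower.algebraMap_apply R K L]
      ring
    refine ⟨⟨k2 * b1 - k1 * b2, le_antisymm ?_ ?_⟩⟩
    · rw [Submodule.mul_le]
      intro a ha b hb
      obtain ⟨r, s, hr, hs⟩ := hco b 0 (by simpa using (hB b).1 hb)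
      obtain ⟨r', s', hr', hs'⟩ := hco 0 a (by simpa using hAy a ha)
      rw [Submodule.mem_span_singleton]
      refine ⟨r * s' - s * r', ?_⟩
      rw [Algebra.smul_def]
      simp only [map_sub, map_mul]
      have : a * b = a * b - 0 * 0 := by ring
      rw [this]
      nth_rewrite 2 [hr']
      nth_rewrite 1 [hs]
      rw [hr, hs']
      ring
    · rw [Submodule.span_singleton_le_iff_mem]
      exact Submodule.sub_mem _ (Submodule.mul_mem_mul hk2 hb1) (Submodule.mul_mem_mul hk1 hb2)
  · rintro ⟨⟨d, hd⟩⟩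
    have hdm : d ∈ A * B := by rw [hd]; exact Submodule.mem_span_singleton_self d
    have hgB : ∀ g : K, (∀ a ∈ A, ∃ r : R, algebraMap R K r = g * a) → g * d ∈ B := by
      intro g hg
      refine Submodule.mul_induction_on hdm ?_ ?_
      · intro a ha b hb
        obtain ⟨r, hr⟩ := hg a ha
        rw [← mul_assoc, ← hr, ← Algebra.smul_def]
        exact B.smul_mem r hb
      · intro p q hp hq
        rw [mul_add]; exact B.add_mem hp hq
    have hG1 := (hB _).1 (hgB g1 hg1)
    have hG2 := (hB _).1 (hgB g2 hg2)
    let e1 : L := a1 • y - algebraMap K L (g2 * d)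
    let e2 : L := a2 • y + algebraMap K L (g1 * d)
    have he1 : e1 ∈ J := J.sub_mem (hAy a1 ha1) hG2
    have he2 : e2 ∈ J := J.add_mem (hAy a2 ha2) hG1
    have hag' := congrArg (algebraMap K L) hag
    simp only [map_add, map_mul, map_one] at hag'
    have hspA : ∀ a ∈ A, a • y ∈ Submodule.span R {e1, e2} := by
      intro a ha
      obtain ⟨r, hr⟩ := hg1 a ha
      obtain ⟨s, hs⟩ := hg2 a ha
      rw [Submodule.mem_span_pair]
      refine ⟨r, s, ?_⟩
      rw [← algebraMap_smul K r, ← algebraMap_smul K s, hr, hs]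
      simp only [e1, e2, Algebra.smul_def, map_mul]
      linear_combination (algebraMap K L a * y) * hag'
    have hspB : ∀ b ∈ B, algebraMap K L b ∈ Submodule.span R {e1, e2} := by
      intro b hb
      have m1 := Submodule.mul_mem_mul ha1 hb
      have m2 := Submodule.mul_mem_mul ha2 hb
      rw [hd, Submodule.mem_span_singleton] at m1 m2
      obtain ⟨r, hr⟩ := m1
      obtain ⟨s, hs⟩ := m2
      rw [Algebra.smul_def] at hr hs
      by_cases h0 : d = 0
      · have : b = 0 := by
          rw [h0, mul_zero] at hr hs
          linear_combination (-b) * hag - g1 * hr - g2 * hs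
        rw [this, map_zero]; exact Submodule.zero_mem _
      · have hx : algebraMap R K s * a1 = algebraMap R K r * a2 := by
          apply mul_right_cancel₀ h0
          linear_combination a1 * hs - a2 * hr
        rw [Submodule.mem_span_pair]
        refine ⟨-s, r, ?_⟩
        have hr' := congrArg (algebraMap K L) hr
        have hs' := congrArg (algebraMap K L) hs
        have hx' := congrArg (algebraMap K L) hx
        simp only [map_mul] at hr' hs' hx'
        rw [← algebraMap_smul K r, ← algebraMap_smul K (-s)]
        simp only [e1, e2, Algebra.smul_def, map_mul, map_neg]
        linear_combination (-y) * hx' + algebraMap K L g1 * hr' + algebraMap K L g2 * hs' +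
          algebraMap K L b * hag'
    have hJ : J = Submodule.span R {e1, e2} := by
      apply le_antisymm
      · intro j hj
        obtain ⟨b, hb, h⟩ := hdec j hj
        rw [h]
        exact Submodule.add_mem _ (hspB b hb) (hspA _ (hAc j hj))
      · rw [Submodule.span_le]
        rintro _ (rfl | rfl)
        · exact he1
        · exact he2
    have hr : Set.range ![e1, e2] = {e1, e2} := by simp [Set.pair_comm]
    have hliK : LinearIndependent K ![e1, e2] := by
      apply linearIndependent_of_top_le_span_of_card_eq_finrank
      · rw [← hfull, hr, Submodule.span_le]
        intro j hj
        rw [hJ] at hj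
        exact Submodule.span_le_restrictScalars R K _ hj
      · simp [hquad]
    have hliR := (LinearIndependent.iff_fractionRing R K).2 hliK
    have := Module.Free.of_basis (Module.Basis.span hliR)
    rw [hr, ← hJ] at this
    exact this

/-- Let `K` be a number field with ring of integers `R = 𝓞 K`, and
`L/K` a quadratic field extension. Let `J` be a full lattice in `L` with respect to
`R` (a finitely generated `R`-submodule of `L` spanning `L` over `K`). Fix
`x₀ ∈ L \ K` and set `𝔞 := {k ∈ K : k·x₀ ∈ J + K}`. Then `J` is free as an `R`-module
if and only if the fractional ideal `𝔞 · (J ∩ K)` of `R` is principal. -/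
theorem lattice_free_iff_principal
    (K : Type*) [Field K] [NumberField K]
    (L : Type*) [Field L] [Algebra K L]
    [Algebra (𝓞 K) L] [IsScalarTower (𝓞 K) K L]
    (hquad : Module.finrank K L = 2)
    (J : Submodule (𝓞 K) L) (hfg : J.FG)
    (hfull : Submodule.span K (J : Set L) = ⊤)
    (x₀ : L) (hx₀ : x₀ ∉ (algebraMap K L).range) :
    Module.Free (𝓞 K) J ↔
      Submodule.IsPrincipal
        ((Submodule.comap ((LinearMap.toSpanSingleton K L x₀).restrictScalars (𝓞 K))
            (J ⊔ Submodule.restrictScalars (𝓞 K) (LinearMap.range (Algebra.linearMap K L)))) *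
          (Submodule.comap ((Algebra.linearMap K L).restrictScalars (𝓞 K)) J)) := by
  apply aux_main (𝓞 K) K L hquad J hfg hfull x₀ hx₀
  · intro k
    rw [Submodule.mem_comap, Submodule.mem_sup]
    simp
  · intro k
    rfl
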